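/- arXiv:2505.10608 — 2 statements merged into one kernel-verified Lean document; each statement's English description precedes it below -/
import Mathlib

section
/- Let V be a finite-dimensional real inner product space and b₁ ∈ ℝ. If G₁ : V → ℝ is a polynomial function satisfying ‖∇G₁(v)‖² = 2·G₁(v) + b₁ for all v ∈ V, then there exist a linear subspace W ⊆ V with orthogonal projection Π_W : V → W and a vector v₀ ∈ W such that G₁(v) = ½·(‖Π_W(v − v₀)‖² − b₁) for all v ∈ V (the case W = {0} giving the constant solution G₁ ≡ −b₁/2). -/
noncomputable section

open MvPolynomial

/-- The standard inner product on `ℝᵏ`. -/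
def dotR {k : ℕ} (a b : Fin k → ℝ) : ℝ := ∑ i, a i * b i

/-- Restriction of a polynomial to the line through `v`. -/
def rayHom {n : ℕ} (v : Fin n → ℝ) : MvPolynomial (Fin n) ℝ →ₐ[ℝ] Polynomial ℝ :=
  aeval (fun i => Polynomial.C (v i) * Polynomial.X)

lemma rayHom_coeff {n : ℕ} (v : Fin n → ℝ) (p : MvPolynomial (Fin n) ℝ) (k : ℕ) :
    (rayHom v p).coeff k = eval v (homogeneousComponent k p) := by
  induction p using MvPolynomial.induction_on' with
  | add p q hp hq => simp [map_add, hp, hq]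
  | monomial d c =>
    have h1 : rayHom v (monomial d c)
        = Polynomial.C (c * ∏ i, v i ^ d i) * Polynomial.X ^ d.degree := by
      rw [rayHom, aeval_monomial, Finsupp.prod_fintype _ _ (by simp)]
      simp only [mul_pow, Finset.prod_mul_distrib, Finset.prod_pow_eq_pow_sum,
        Finsupp.degree_eq_sum, map_mul, map_prod, map_pow, Polynomial.algebraMap_eq]
      ring
    rw [h1, homogeneousComponent_of_mem (isHomogeneous_monomial c rfl),
      Polynomial.coeff_C_mul_X_pow]
    split_ifs with hk
    · rw [eval_monomial, Finsupp.prod_fintype _ _ (by simp)]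
    · simp

lemma rayHom_natDegree {n : ℕ} (v : Fin n → ℝ) (p : MvPolynomial (Fin n) ℝ) (D : ℕ)
    (h : p.totalDegree ≤ D) : (rayHom v p).natDegree ≤ D := by
  rw [Polynomial.natDegree_le_iff_coeff_eq_zero]
  intro N hN
  rw [rayHom_coeff, homogeneousComponent_eq_zero _ _ (by omega), map_zero]

lemma totalDegree_le_iff_degree {n : ℕ} (p : MvPolynomial (Fin n) ℝ) (D : ℕ) :
    p.totalDegree ≤ D ↔ ∀ m : Fin n →₀ ℕ, coeff m p ≠ 0 → m.degree ≤ D := by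
  rw [totalDegree, Finset.sup_le_iff]
  simp only [mem_support_iff]
  rfl

lemma totalDegree_pderiv_le' {n : ℕ} (p : MvPolynomial (Fin n) ℝ) (i : Fin n) (D : ℕ)
    (h : p.totalDegree ≤ D + 1) : (pderiv i p).totalDegree ≤ D := by
  rw [totalDegree_le_iff_degree] at h ⊢
  intro m hm
  rw [coeff_pderiv] at hm
  have := h _ (left_ne_zero_of_mul hm)
  rw [map_add, Finsupp.degree_single] at this
  omega

lemma coeff_eq_zero_of_pderiv {n : ℕ} (p : MvPolynomial (Fin n) ℝ) (m : Fin n →₀ ℕ)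
    (hm : m ≠ 0)
    (h : ∀ i (s : Fin n →₀ ℕ), s + Finsupp.single i 1 = m → coeff s (pderiv i p) = 0) :
    coeff m p = 0 := by
  obtain ⟨i, hi⟩ := Finsupp.ne_iff.1 hm
  have hs : m - Finsupp.single i 1 + Finsupp.single i 1 = m :=
    Finsupp.sub_add_single_one_cancel hi
  have := h i _ hs
  rw [coeff_pderiv, hs] at this
  rcases mul_eq_zero.1 this with h | h
  · exact h
  · exfalso
    exact Nat.cast_add_one_ne_zero _ h

lemma eq_C_of_pderiv {n : ℕ} (p : MvPolynomial (Fin n) ℝ) (h : ∀ i, pderiv i p = 0) :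
    p = C (coeff 0 p) := by
  ext m
  rw [coeff_C]
  split_ifs with hm
  · rw [hm]
  · exact coeff_eq_zero_of_pderiv p m (Ne.symm hm) (fun i s _ => by rw [h i, coeff_zero])

lemma degree_step {n : ℕ} (b : ℝ) (p : MvPolynomial (Fin n) ℝ)
    (hp : ∑ i, (pderiv i p) ^ 2 = 2 * p + C b) (D : ℕ) (hD : 2 ≤ D)
    (hd : p.totalDegree ≤ D + 1) : p.totalDegree ≤ D := by
  have key : ∀ i, homogeneousComponent D (pderiv i p) = 0 := by
    intro i
    apply MvPolynomial.funext
    intro v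
    rw [map_zero]
    have h1 := congrArg (fun q => (rayHom v q).coeff (2 * D)) hp
    have h2 : (rayHom v (2 * p + C b)).coeff (2 * D) = 0 := by
      rw [rayHom_coeff, homogeneousComponent_eq_zero, map_zero]
      have a1 : (2 * p + C b).totalDegree ≤ D + 1 := by
        refine (totalDegree_add _ _).trans (max_le ?_ (by simp))
        refine (totalDegree_mul _ _).trans ?_
        have : (2 : MvPolynomial (Fin n) ℝ).totalDegree = 0 := by
          rw [show (2 : MvPolynomial (Fin n) ℝ) = C 2 from (map_ofNat C 2).symm, totalDegree_C]
        omega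
      omega
    simp only [h2, map_sum, map_pow, Polynomial.finsetSum_coeff] at h1
    have h3 : ∀ j, ((rayHom v (pderiv j p)) ^ 2).coeff (2 * D)
        = (eval v (homogeneousComponent D (pderiv j p))) ^ 2 := by
      intro j
      rw [Polynomial.coeff_pow_of_natDegree_le
        (rayHom_natDegree v _ D (totalDegree_pderiv_le' p j D hd)), rayHom_coeff]
    simp only [h3] at h1
    rw [Finset.sum_eq_zero_iff_of_nonneg (fun _ _ => sq_nonneg _)] at h1
    exact pow_eq_zero_iff (two_ne_zero) |>.1 (h1 i (Finset.mem_univ i))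
  rw [totalDegree_le_iff_degree] at hd ⊢
  intro m hm
  by_contra hlt
  have hmd : m.degree = D + 1 := by have := hd m hm; omega
  apply hm
  apply coeff_eq_zero_of_pderiv
  · rintro rfl
    simp at hmd
  · rintro i s rfl
    rw [map_add, Finsupp.degree_single] at hmd
    have := congrArg (coeff s) (key i)
    rwa [coeff_homogeneousComponent, if_pos (by omega), coeff_zero] at this

lemma degree_le_two {n : ℕ} (b : ℝ) (p : MvPolynomial (Fin n) ℝ)
    (hp : ∑ i, (pderiv i p) ^ 2 = 2 * p + C b) : p.totalDegree ≤ 2 := by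
  have : ∀ k, p.totalDegree ≤ 2 + k → p.totalDegree ≤ 2 := by
    intro k
    induction k with
    | zero => exact id
    | succ k ih => exact fun h => ih (degree_step b p hp (2 + k) (by omega) h)
  exact this p.totalDegree (by omega)

/-- Let `V = ℝⁿ` (a finite-dimensional real inner product space) and `b₁ ∈ ℝ`.
If the polynomial function `G₁` on `V` (given by the polynomial `p`) satisfies
`‖∇G₁(v)‖² = 2·G₁(v) + b₁` for all `v` (the gradient having components `∂ᵢp`), then there are
an orthogonal projection `Π_W` onto a linear subspace `W ⊆ V` and `w₀ ∈ W` such that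
`G₁(v) = ½(‖Π_W(v − v₀)‖² − b₁)` for all `v`. -/
theorem stmt_6 (n : ℕ) (b₁ : ℝ) (p : MvPolynomial (Fin n) ℝ)
    (h : ∀ v : Fin n → ℝ,
      (∑ i : Fin n, (MvPolynomial.eval v (pderiv i p)) ^ 2) = 2 * MvPolynomial.eval v p + b₁) :
    ∃ Pw : (Fin n → ℝ) →ₗ[ℝ] (Fin n → ℝ), Pw ∘ₗ Pw = Pw ∧
      (∀ u w : Fin n → ℝ, dotR (Pw u) w = dotR u (Pw w)) ∧
      ∃ v₀ : Fin n → ℝ, Pw v₀ = v₀ ∧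
        ∀ v : Fin n → ℝ,
          MvPolynomial.eval v p = (1 / 2) * (dotR (Pw (v - v₀)) (Pw (v - v₀)) - b₁) := by
  have hp : ∑ i, (pderiv i p) ^ 2 = 2 * p + C b₁ := by
    apply MvPolynomial.funext
    intro v
    simpa using h v
  have hdeg := degree_le_two b₁ p hp
  -- the constant Hessian
  obtain ⟨H, hH⟩ : ∃ H : Fin n → Fin n → ℝ, ∀ i j, pderiv j (pderiv i p) = C (H i j) := by
    refine ⟨fun i j => coeff 0 (pderiv j (pderiv i p)), fun i j => ?_⟩
    exact totalDegree_eq_zero_iff_eq_C.1 (Nat.le_zero.1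
      (totalDegree_pderiv_le' _ j 0 (totalDegree_pderiv_le' p i 1 hdeg)))
  -- first derivative of the equation
  have hd1 : ∀ j, ∑ i, C (H i j) * pderiv i p = pderiv j p := by
    intro j
    have h1 := congrArg (pderiv j) hp
    have h2 : (2 : MvPolynomial (Fin n) ℝ) = C 2 := (map_ofNat C 2).symm
    rw [h2, map_sum, map_add, pderiv_C_mul, pderiv_C, add_zero] at h1
    simp only [pderiv_pow, hH] at h1
    have h3 : C 2 * ∑ i, C (H i j) * pderiv i p = C 2 * pderiv j p := by
      rw [← h1, Finset.mul_sum]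
      refine Finset.sum_congr rfl fun i _ => ?_
      rw [← h2]
      push_cast
      ring
    exact mul_left_cancel₀ (by rw [← h2]; exact two_ne_zero) h3
  have hd2 : ∀ j k, ∑ i, H i j * H i k = H j k := by
    intro j k
    have h1 := congrArg (fun q => coeff 0 (pderiv k q)) (hd1 j)
    simpa [map_sum, pderiv_C_mul, hH, coeff_sum] using h1
  have hsymm : ∀ j k, H j k = H k j := by
    intro j k
    rw [← hd2 j k, ← hd2 k j]
    exact Finset.sum_congr rfl fun i _ => mul_comm _ _
  have haff : ∀ i (v : Fin n → ℝ),
      eval v (pderiv i p) = eval 0 (pderiv i p) + ∑ j, H i j * v j := by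
    intro i v
    have h1 := eq_C_of_pderiv (pderiv i p - ∑ j, C (H i j) * X j) (by
      intro k
      rw [map_sub, map_sum, hH]
      simp [pderiv_C_mul, pderiv_X, Pi.single_apply])
    have hv := congrArg (eval v) h1
    have h0 := congrArg (eval 0) h1
    simp only [map_sub, map_sum, map_mul, eval_C, eval_X, Pi.zero_apply, mul_zero,
      Finset.sum_const_zero, sub_zero] at hv h0
    linarith
  have hgrad : ∀ j, ∑ i, H j i * eval 0 (pderiv i p) = eval 0 (pderiv j p) := by
    intro j
    have h1 := congrArg (eval (0 : Fin n → ℝ)) (hd1 j)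
    simp only [map_sum, map_mul, eval_C] at h1
    rw [← h1]
    exact Finset.sum_congr rfl fun i _ => by rw [hsymm]
  have happ : ∀ (u : Fin n → ℝ) i, Matrix.mulVecLin (Matrix.of H) u i = ∑ j, H i j * u j := by
    intro u i
    rfl
  refine ⟨Matrix.mulVecLin (Matrix.of H), ?_, ?_, fun i => - eval 0 (pderiv i p), ?_, ?_⟩
  · rw [← Matrix.mulVecLin_mul]
    congr 1
    ext j k
    rw [Matrix.mul_apply]
    simp only [Matrix.of_apply]
    rw [← hd2 j k]
    exact Finset.sum_congr rfl fun i _ => by rw [hsymm j i]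
  · intro u w
    simp only [dotR, happ, Finset.sum_mul, Finset.mul_sum]
    rw [Finset.sum_comm]
    refine Finset.sum_congr rfl fun i _ => Finset.sum_congr rfl fun j _ => ?_
    rw [hsymm j i]
    ring
  · ext i
    rw [happ]
    simp only [mul_neg, Finset.sum_neg_distrib, hgrad]
  · intro v
    have h1 : ∀ i, Matrix.mulVecLin (Matrix.of H) (v - fun i => - eval 0 (pderiv i p)) i
        = eval v (pderiv i p) := by
      intro i
      rw [happ, haff i v, ← hgrad i, ← Finset.sum_add_distrib]
      refine Finset.sum_congr rfl fun j _ => ?_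
      rw [Pi.sub_apply]
      ring
    have h2 := h v
    simp only [dotR, h1]
    simp only [pow_two] at h2
    rw [h2]
    ring
end
end

section
/- Let G be a polynomial function on V × Z × ℝ not divisible by t, set F = G/t, and suppose there exist b₁, b₀ ∈ ℝ such that F satisfies the transnormality condition. If the degree of G in the variable t equals 2, then there exist a constant c ≠ 0, a real number β, a linear subspace W ⊆ V with orthogonal projection Π_W, a vector v₀ ∈ W, a linear subspace Y ⊆ Z with orthogonal projection Π_Y, a polynomial map c : V → Z, and a polynomial function d : V → ℝ such that G(v,z,t) = c·( t² + ½(‖Π_W(v − v₀)‖² − β)·t + ⟨z, Π_Y z⟩ + ⟨c(v), z⟩ + d(v) ). -/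
noncomputable section

open MvPolynomial

/-- Evaluation of a polynomial on `V × Z × ℝ` (`V = ℝⁿ`, `Z = ℝᵐ`) at the point `(v, z, t)`. -/
def evp {n m : ℕ} (q : MvPolynomial (Fin n ⊕ Fin m ⊕ Unit) ℝ)
    (v : Fin n → ℝ) (z : Fin m → ℝ) (t : ℝ) : ℝ :=
  MvPolynomial.eval (Sum.elim v (Sum.elim z fun _ => t)) q

/-- The transnormality condition for `F = G/t` with constants `b₁, b₀`:
`(1/t)(−2G·∂_tG + Σᵢ (∂_{eᵢ}G − ½∂_{[eᵢ,v]}G)²) + Σ_α (∂_{f_α}G)² + (∂_tG)² = b₁·(G/t) + b₀`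
at every point of the half-space `S = {t > 0}`, where `∂_{[eᵢ,v]}G = Σ_α [eᵢ,v]_α · ∂_{f_α}G`
and `[·,·] = br` is the Lie bracket `V × V → Z`. -/
def Transnormal (n m : ℕ) (br : (Fin n → ℝ) →ₗ[ℝ] (Fin n → ℝ) →ₗ[ℝ] (Fin m → ℝ))
    (G : MvPolynomial (Fin n ⊕ Fin m ⊕ Unit) ℝ) (b₁ b₀ : ℝ) : Prop :=
  ∀ (v : Fin n → ℝ) (z : Fin m → ℝ) (t : ℝ), 0 < t →
    (1 / t) * (-2 * evp G v z t * evp (pderiv (Sum.inr (Sum.inr ())) G) v z t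
        + ∑ i : Fin n,
            (evp (pderiv (Sum.inl i) G) v z t
              - (1 / 2) * ∑ α : Fin m,
                  (br (Pi.single i 1) v) α * evp (pderiv (Sum.inr (Sum.inl α)) G) v z t) ^ 2)
      + (∑ α : Fin m, (evp (pderiv (Sum.inr (Sum.inl α)) G) v z t) ^ 2)
      + (evp (pderiv (Sum.inr (Sum.inr ())) G) v z t) ^ 2
    = b₁ * (evp G v z t / t) + b₀


/-- Polynomials all of whose monomials have `w`-weight at most `N`. -/
def FD {σ : Type} (w : σ → ℕ) (N : ℕ) : Submodule ℝ (MvPolynomial σ ℝ) where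
  carrier := {p | ∀ d, coeff d p ≠ 0 → Finsupp.weight w d ≤ N}
  zero_mem' := by intro d hd; simp at hd
  add_mem' := by
    intro p q hp hq d hd
    by_cases h : coeff d p = 0
    · by_cases h' : coeff d q = 0
      · simp [h, h'] at hd
      · exact hq d h'
    · exact hp d h
  smul_mem' := by
    intro r p hp d hd
    apply hp d
    intro h
    simp [h] at hd

theorem mem_FD {σ : Type} {w : σ → ℕ} {N : ℕ} {p : MvPolynomial σ ℝ} :
    p ∈ FD w N ↔ ∀ d, coeff d p ≠ 0 → Finsupp.weight w d ≤ N := Iff.rfl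

theorem FD_mono {σ : Type} {w : σ → ℕ} {N M : ℕ} (h : N ≤ M) {p : MvPolynomial σ ℝ}
    (hp : p ∈ FD w N) : p ∈ FD w M := fun d hd => (hp d hd).trans h

theorem FD_of_hom {σ : Type} {w : σ → ℕ} {N : ℕ} {p : MvPolynomial σ ℝ}
    (hp : IsWeightedHomogeneous w p N) : p ∈ FD w N := fun _ hd => (hp hd).le

theorem FD_mul {σ : Type} {w : σ → ℕ} {N M : ℕ} {p q : MvPolynomial σ ℝ}
    (hp : p ∈ FD w N) (hq : q ∈ FD w M) : p * q ∈ FD w (N + M) := by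
  classical
  intro d hd
  rw [coeff_mul] at hd
  obtain ⟨⟨a, b⟩, hab, hne⟩ := Finset.exists_ne_zero_of_sum_ne_zero hd
  rw [Finset.HasAntidiagonal.mem_antidiagonal] at hab
  simp only at hab hne
  rw [← hab, map_add]
  exact add_le_add (hp a (left_ne_zero_of_mul hne)) (hq b (right_ne_zero_of_mul hne))

theorem FD_C {σ : Type} {w : σ → ℕ} {N : ℕ} (r : ℝ) : (C r : MvPolynomial σ ℝ) ∈ FD w N :=
  FD_mono (Nat.zero_le _) (FD_of_hom (isWeightedHomogeneous_C w r))

theorem FD_X {σ : Type} {w : σ → ℕ} {N : ℕ} (i : σ) (h : w i ≤ N) :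
    (X i : MvPolynomial σ ℝ) ∈ FD w N :=
  FD_mono h (FD_of_hom (isWeightedHomogeneous_X ℝ w i))

theorem FD_pderiv {σ : Type} {w : σ → ℕ} {N M : ℕ} {p : MvPolynomial σ ℝ} (i : σ)
    (hp : p ∈ FD w N) (h : N ≤ M + w i) : pderiv i p ∈ FD w M := by
  intro d hd
  rw [coeff_pderiv] at hd
  have := hp _ (left_ne_zero_of_mul hd)
  rw [map_add, Finsupp.weight_single] at this
  simp at this
  omega

theorem FD_pderiv_zero {σ : Type} {w : σ → ℕ} {p : MvPolynomial σ ℝ} (i : σ)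
    (hp : p ∈ FD w 0) (h : 0 < w i) : pderiv i p = 0 := by
  ext d
  rw [coeff_pderiv, coeff_zero]
  by_contra hd
  have := hp _ (left_ne_zero_of_mul hd)
  rw [map_add, Finsupp.weight_single] at this
  simp at this
  omega

theorem FD_top {σ : Type} {w : σ → ℕ} {N : ℕ} {p : MvPolynomial σ ℝ}
    (hp : p ∈ FD w (N + 1)) : p - weightedHomogeneousComponent w (N + 1) p ∈ FD w N := by
  intro d hd
  rw [coeff_sub, coeff_weightedHomogeneousComponent] at hd
  split_ifs at hd with h
  · simp at hd
  · have := hp d (by simpa using hd)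
    omega

theorem hom_FD_zero {σ : Type} {w : σ → ℕ} {N M : ℕ} {p : MvPolynomial σ ℝ}
    (hh : IsWeightedHomogeneous w p N) (hp : p ∈ FD w M) (h : M < N) : p = 0 := by
  ext d
  rw [coeff_zero]
  by_contra hd
  have h1 := hh hd
  have h2 := hp d hd
  omega

theorem FD_exists {σ : Type} (w : σ → ℕ) (p : MvPolynomial σ ℝ) : ∃ N, p ∈ FD w N :=
  ⟨weightedTotalDegree w p, fun _ hd => le_weightedTotalDegree w (mem_support_iff.2 hd)⟩

theorem pderiv_comm' {σ : Type} (i j : σ) (p : MvPolynomial σ ℝ) :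
    pderiv i (pderiv j p) = pderiv j (pderiv i p) := by
  classical
  ext d
  simp only [coeff_pderiv]
  rw [add_right_comm]
  by_cases h : i = j
  · subst h; rfl
  · simp [h, Ne.symm h, mul_assoc]
    left; ring

theorem eval_indep {σ : Type} (p : MvPolynomial σ ℝ) (x y : σ → ℝ)
    (h : ∀ j, x j ≠ y j → pderiv j p = 0) : eval x p = eval y p := by
  rw [eval_eq, eval_eq]
  refine Finset.sum_congr rfl fun d hd => ?_
  congr 1
  refine Finset.prod_congr rfl fun j hj => ?_
  by_cases hxy : x j = y j
  · rw [hxy]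
  · exfalso
    have h0 := congrArg (coeff (d - Finsupp.single j 1)) (h j hxy)
    rw [coeff_pderiv, coeff_zero] at h0
    have hle : Finsupp.single j 1 ≤ d := by
      rw [Finsupp.single_le_iff]
      exact Nat.one_le_iff_ne_zero.2 (Finsupp.mem_support_iff.1 hj)
    rw [tsub_add_cancel_of_le hle] at h0
    rcases mul_eq_zero.1 h0 with h1 | h1
    · exact (mem_support_iff.1 hd) h1
    · exact absurd h1 (by positivity)

theorem sos_zero {σ : Type} {k : ℕ} (f : Fin k → MvPolynomial σ ℝ) (h : ∑ i, (f i) ^ 2 = 0) :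
    ∀ i, f i = 0 := by
  intro i
  apply MvPolynomial.funext
  intro x
  have h1 := congrArg (eval x) h
  simp only [map_sum, map_pow, map_zero] at h1
  rw [Finset.sum_eq_zero_iff_of_nonneg (fun _ _ => sq_nonneg _)] at h1
  simpa using h1 i (Finset.mem_univ i)

/-- The leading part of a sum of squares. -/
theorem sos_top {σ : Type} {w : σ → ℕ} {k N M : ℕ} (f g : Fin k → MvPolynomial σ ℝ)
    (hg : ∀ i, IsWeightedHomogeneous w (g i) (N + 1)) (hfg : ∀ i, f i - g i ∈ FD w N)
    (hs : ∑ i, (f i) ^ 2 ∈ FD w M) (hM : M < 2 * N + 2) : ∀ i, g i = 0 := by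
  apply sos_zero
  have hh : IsWeightedHomogeneous w (∑ i, (g i) ^ 2) (2 * N + 2) := by
    apply IsWeightedHomogeneous.sum
    intro i _
    have := (hg i).mul (hg i)
    rw [pow_two]
    convert this using 1
    ring
  refine hom_FD_zero (M := 2 * N + 1) hh ?_ (by omega)
  have e : ∑ i, (g i) ^ 2 = ∑ i, (f i) ^ 2 - ∑ i, (f i - g i) * ((f i - g i) + 2 * g i) := by
    rw [← Finset.sum_sub_distrib]
    exact Finset.sum_congr rfl fun i _ => by ring
  rw [e]
  refine Submodule.sub_mem _ (FD_mono (by omega) hs) (Submodule.sum_mem _ fun i _ => ?_)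
  refine FD_mono (by omega : N + (N + 1) ≤ _) (FD_mul (hfg i) (Submodule.add_mem _ (FD_mono (by omega) (hfg i)) ?_))
  rw [two_mul]
  exact Submodule.add_mem _ (FD_of_hom (hg i)) (FD_of_hom (hg i))

theorem hom_zero_of_pderiv {σ : Type} [Fintype σ] {w : σ → ℕ} {k N : ℕ} (e : Fin k → σ)
    (hw0 : ∀ j, j ∉ Set.range e → w j = 0) {p : MvPolynomial σ ℝ}
    (hp : IsWeightedHomogeneous w p (N + 1)) (h : ∀ i, pderiv (e i) p = 0) : p = 0 := by
  have := hp.sum_weight_X_mul_pderiv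
  rw [Finset.sum_eq_zero] at this
  · have h2 : (N : ℝ) + 1 ≠ 0 := by positivity
    rw [eq_comm, nsmul_eq_mul, mul_eq_zero] at this
    rcases this with h1 | h1
    · exfalso
      have h3 := congrArg (eval (0 : σ → ℝ)) h1
      simp at h3
      exact h2 h3
    · exact h1
  · intro j _
    by_cases hj : j ∈ Set.range e
    · obtain ⟨i, rfl⟩ := hj
      simp [h]
    · simp [hw0 j hj]

theorem reduce_deg {σ : Type} [Fintype σ] {w : σ → ℕ} {k : ℕ} (e : Fin k → σ)
    (hw1 : ∀ i, w (e i) = 1) (hw0 : ∀ j, j ∉ Set.range e → w j = 0) (p : MvPolynomial σ ℝ)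
    (h : ∀ N, p ∈ FD w N → ∑ i, (pderiv (e i) p) ^ 2 ∈ FD w N) : p ∈ FD w 2 := by
  obtain ⟨N, hN⟩ := FD_exists w p
  have key : ∀ N, p ∈ FD w (N + 2) → p ∈ FD w 2 := by
    intro N
    induction N with
    | zero => exact id
    | succ N ih =>
      intro hp
      apply ih
      have ht := FD_top (N := N + 2) hp
      have hc := weightedHomogeneousComponent_isWeightedHomogeneous (w := w) (N + 2 + 1) p
      have hz := sos_top (w := w) (N := N + 1) (M := N + 3) (fun i => pderiv (e i) p)
        (fun i => pderiv (e i) (weightedHomogeneousComponent w (N + 2 + 1) p))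
        (fun i => hc.pderiv (by rw [hw1])) (fun i => by
          rw [← map_sub]
          exact FD_pderiv _ ht (by rw [hw1])) (h _ hp) (by omega)
      have hz' := hom_zero_of_pderiv e hw0 hc hz
      rw [hz', sub_zero] at ht
      exact ht
  exact key N (FD_mono (by omega) hN)

/-- Polynomial solutions of `|∇p|² = 2p`. -/
theorem quad_form {σ : Type} [Fintype σ] {w : σ → ℕ} {k : ℕ} (e : Fin k → σ)
    (he : Function.Injective e)
    (hw1 : ∀ i, w (e i) = 1) (hw0 : ∀ j, j ∉ Set.range e → w j = 0) (p : MvPolynomial σ ℝ)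
    (h0 : ∀ j, j ∉ Set.range e → pderiv j p = 0)
    (h : ∑ i, (pderiv (e i) p) ^ 2 = 2 * p) :
    ∃ P : (Fin k → ℝ) →ₗ[ℝ] (Fin k → ℝ), P ∘ₗ P = P ∧
      (∀ u w : Fin k → ℝ, dotR (P u) w = dotR u (P w)) ∧
      ∃ v₀ : Fin k → ℝ, P v₀ = v₀ ∧ ∀ x : σ → ℝ,
        eval x p = (1 / 2) * dotR (P (fun i => x (e i) - v₀ i)) (P (fun i => x (e i) - v₀ i)) := by
  classical
  have hp2 : p ∈ FD w 2 := reduce_deg e hw1 hw0 p (fun N hN => by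
    rw [h, two_mul]; exact Submodule.add_mem _ hN hN)
  have hHc : ∀ i j x, eval x (pderiv (e i) (pderiv (e j) p))
      = eval 0 (pderiv (e i) (pderiv (e j) p)) := by
    intro i j x
    apply eval_indep
    intro l _
    by_cases hl : l ∈ Set.range e
    · obtain ⟨l, rfl⟩ := hl
      refine FD_pderiv_zero (w := w) _ ?_ (by rw [hw1]; norm_num)
      exact FD_pderiv (N := 1) _ (FD_pderiv (N := 2) _ hp2 (by rw [hw1])) (by rw [hw1])
    · rw [pderiv_comm', pderiv_comm' l, h0 l hl]; simp
  set H : Fin k → Fin k → ℝ := fun i j => eval 0 (pderiv (e i) (pderiv (e j) p)) with hH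
  have hsym : ∀ i j, H i j = H j i := fun i j => by simp only [hH]; rw [pderiv_comm']
  have hHp : ∀ i j, pderiv (e i) (pderiv (e j) p) = C (H i j) := by
    intro i j
    apply MvPolynomial.funext
    intro x
    rw [hHc, eval_C]
  set v₀ : Fin k → ℝ := fun i => - eval 0 (pderiv (e i) p) with hv₀
  have hg : ∀ i x, eval x (pderiv (e i) p) = ∑ j, H i j * x (e j) - v₀ i := by
    intro i x
    have := eval_indep (pderiv (e i) p - ∑ j, C (H i j) * X (e j)) x 0 (by
      intro l _
      rw [map_sub, map_sum]
      simp only [pderiv_C_mul]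
      by_cases hl : l ∈ Set.range e
      · obtain ⟨l, rfl⟩ := hl
        rw [hHp, Finset.sum_eq_single l]
        · rw [pderiv_X_self, hsym]; simp
        · intro b _ hb
          rw [pderiv_X_of_ne (fun hh => hb (he hh))]; simp
        · simp
      · rw [pderiv_comm', h0 l hl, Finset.sum_eq_zero]
        · simp
        · intro b _
          rw [pderiv_X_of_ne (fun hh => hl ⟨b, hh⟩)]; simp)
    simp only [map_sub, map_sum, map_mul, eval_C, eval_X, Pi.zero_apply, mul_zero,
      Finset.sum_const_zero, sub_zero] at this
    simp only [hv₀]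
    linarith
  have hPg : ∀ j x, ∑ i, H j i * eval x (pderiv (e i) p) = eval x (pderiv (e j) p) := by
    intro j x
    have := congrArg (fun q => eval x (pderiv (e j) q)) h
    rw [two_mul] at this
    simp only [map_sum, map_add, pow_two, pderiv_mul, hHp, map_mul, eval_C] at this
    have e2 : ∀ i, H j i * eval x (pderiv (e i) p) + eval x (pderiv (e i) p) * H j i
      = 2 * (H j i * eval x (pderiv (e i) p)) := fun i => by ring
    simp only [e2, ← Finset.mul_sum] at this
    linarith
  set P : (Fin k → ℝ) →ₗ[ℝ] (Fin k → ℝ) := Matrix.mulVecLin (Matrix.of H) with hP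
  have hPa : ∀ u i, P u i = ∑ j, H i j * u j := by
    intro u i
    simp [hP, Matrix.mulVec, dotProduct]
  have hPv : P v₀ = v₀ := by
    funext j
    rw [hPa]
    have := hPg j 0
    simp only [hg] at this
    simpa using this
  have hgP : ∀ i x, eval x (pderiv (e i) p) = P (fun i => x (e i)) i - v₀ i := by
    intro i x; rw [hg, hPa]
  refine ⟨P, ?_, ?_, v₀, hPv, ?_⟩
  · apply LinearMap.ext
    intro y
    funext j
    have h1 := hPg j (Function.extend e y 0)
    simp only [hgP, he.extend_apply] at h1
    have h2 := congrFun hPv j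
    rw [hPa] at h2
    rw [LinearMap.comp_apply, hPa (P y)]
    simp only [mul_sub, Finset.sum_sub_distrib] at h1
    linarith
  · intro u v
    simp only [dotR, hPa, Finset.sum_mul, Finset.mul_sum]
    rw [Finset.sum_comm]
    refine Finset.sum_congr rfl fun i _ => Finset.sum_congr rfl fun j _ => ?_
    rw [hsym]; ring
  · intro x
    have e1 : (fun i => x (e i) - v₀ i) = (fun i => x (e i)) - v₀ := rfl
    rw [e1, map_sub, hPv]
    have := congrArg (eval x) h
    simp only [map_sum, map_pow, map_mul, hgP] at this
    simp at this
    have e2 : dotR (P (fun i => x (e i)) - v₀) (P (fun i => x (e i)) - v₀)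
      = ∑ i, (P (fun i => x (e i)) i - v₀ i) ^ 2 := by
      simp only [dotR, Pi.sub_apply, pow_two]
    rw [e2]
    linarith

/-- The inclusion of the variables `(v, z)` into `(v, z, t)`. -/
def inc (n m : ℕ) : Fin n ⊕ Fin m → Fin n ⊕ Fin m ⊕ Unit :=
  Sum.elim Sum.inl (fun a => Sum.inr (Sum.inl a))

theorem inc_inj (n m : ℕ) : Function.Injective (inc n m) := by
  rintro (a | a) (b | b) h <;> simp [inc] at h <;> simp [h]

theorem inc_ne (n m : ℕ) (a : Fin n ⊕ Fin m) : inc n m a ≠ Sum.inr (Sum.inr ()) := by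
  rcases a with a | a <;> simp [inc]

theorem decomp {n m : ℕ} (G : MvPolynomial (Fin n ⊕ Fin m ⊕ Unit) ℝ)
    (hdeg : degreeOf (Sum.inr (Sum.inr ())) G ≤ 2) :
    ∃ A B D : MvPolynomial (Fin n ⊕ Fin m) ℝ,
      G = rename (inc n m) A * X (Sum.inr (Sum.inr ())) ^ 2
        + rename (inc n m) B * X (Sum.inr (Sum.inr ())) + rename (inc n m) D := by
  rw [degreeOf_le_iff] at hdeg
  rw [← support_sum_monomial_coeff G]
  refine Finset.sum_induction _ (fun G => ∃ A B D : MvPolynomial (Fin n ⊕ Fin m) ℝ,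
      G = rename (inc n m) A * X (Sum.inr (Sum.inr ())) ^ 2
        + rename (inc n m) B * X (Sum.inr (Sum.inr ())) + rename (inc n m) D) ?_ ?_ ?_
  · rintro p q ⟨A, B, D, rfl⟩ ⟨A', B', D', rfl⟩
    refine ⟨A + A', B + B', D + D', ?_⟩
    simp only [map_add]; ring
  · exact ⟨0, 0, 0, by simp⟩
  · intro d hd
    have h2 := hdeg d hd
    set M : MvPolynomial (Fin n ⊕ Fin m) ℝ := C (coeff d G) *
      ∏ a, X a ^ (d (inc n m a)) with hM
    have key : monomial d (coeff d G)
        = rename (inc n m) M * X (Sum.inr (Sum.inr ())) ^ (d (Sum.inr (Sum.inr ()))) := by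
      rw [monomial_eq, Finsupp.prod_fintype _ _ (by simp)]
      simp [hM, Fintype.prod_sum_type, inc, mul_assoc]
    rw [key]
    interval_cases hk : d (Sum.inr (Sum.inr ()))
    · exact ⟨0, 0, M, by simp⟩
    · exact ⟨0, M, 0, by simp⟩
    · exact ⟨M, 0, 0, by simp⟩

theorem evp_rename {n m : ℕ} (A : MvPolynomial (Fin n ⊕ Fin m) ℝ) (v : Fin n → ℝ) (z : Fin m → ℝ)
    (t : ℝ) : evp (rename (inc n m) A) v z t = eval (Sum.elim v z) A := by
  rw [evp, eval_rename]
  congr 2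
  funext a
  rcases a with a | a <;> simp [inc]

theorem pderiv_t_rename {n m : ℕ} (A : MvPolynomial (Fin n ⊕ Fin m) ℝ) :
    pderiv (Sum.inr (Sum.inr ())) (rename (inc n m) A) = 0 := by
  classical
  apply pderiv_eq_zero_of_notMem_vars
  intro h
  have := vars_rename (inc n m) A h
  rw [Finset.mem_image] at this
  obtain ⟨a, _, ha⟩ := this
  exact inc_ne n m a ha

theorem evp_G {n m : ℕ} (A B D : MvPolynomial (Fin n ⊕ Fin m) ℝ) (v : Fin n → ℝ) (z : Fin m → ℝ)
    (t : ℝ) : evp (rename (inc n m) A * X (Sum.inr (Sum.inr ())) ^ 2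
        + rename (inc n m) B * X (Sum.inr (Sum.inr ())) + rename (inc n m) D) v z t
      = eval (Sum.elim v z) A * t ^ 2 + eval (Sum.elim v z) B * t + eval (Sum.elim v z) D := by
  simp only [← evp_rename _ v z t]
  simp [evp]

theorem evp_Gt {n m : ℕ} (A B D : MvPolynomial (Fin n ⊕ Fin m) ℝ) (v : Fin n → ℝ) (z : Fin m → ℝ)
    (t : ℝ) : evp (pderiv (Sum.inr (Sum.inr ())) (rename (inc n m) A * X (Sum.inr (Sum.inr ())) ^ 2
        + rename (inc n m) B * X (Sum.inr (Sum.inr ())) + rename (inc n m) D)) v z t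
      = 2 * eval (Sum.elim v z) A * t + eval (Sum.elim v z) B := by
  simp only [← evp_rename _ v z t]
  simp [evp, pderiv_t_rename]
  ring

theorem evp_Gx {n m : ℕ} (A B D : MvPolynomial (Fin n ⊕ Fin m) ℝ) (a : Fin n ⊕ Fin m)
    (v : Fin n → ℝ) (z : Fin m → ℝ)
    (t : ℝ) : evp (pderiv (inc n m a) (rename (inc n m) A * X (Sum.inr (Sum.inr ())) ^ 2
        + rename (inc n m) B * X (Sum.inr (Sum.inr ())) + rename (inc n m) D)) v z t
      = eval (Sum.elim v z) (pderiv a A) * t ^ 2 + eval (Sum.elim v z) (pderiv a B) * t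
        + eval (Sum.elim v z) (pderiv a D) := by
  simp only [← evp_rename _ v z t]
  have h1 : pderiv (inc n m a) (X (Sum.inr (Sum.inr ())) : MvPolynomial _ ℝ) = 0 :=
    pderiv_X_of_ne (Ne.symm (inc_ne n m a))
  simp [evp, pderiv_rename (inc_inj n m), h1]
  ring

/-- The coefficient polynomial of `[eᵢ, v]`. -/
def brp {n m : ℕ} (br : (Fin n → ℝ) →ₗ[ℝ] (Fin n → ℝ) →ₗ[ℝ] (Fin m → ℝ)) (i : Fin n) (α : Fin m) :
    MvPolynomial (Fin n ⊕ Fin m) ℝ :=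
  ∑ j, C (br (Pi.single i 1) (Pi.single j 1) α) * X (Sum.inl j)

theorem eval_brp {n m : ℕ} (br : (Fin n → ℝ) →ₗ[ℝ] (Fin n → ℝ) →ₗ[ℝ] (Fin m → ℝ)) (i : Fin n)
    (α : Fin m) (v : Fin n → ℝ) (z : Fin m → ℝ) :
    eval (Sum.elim v z) (brp br i α) = br (Pi.single i 1) v α := by
  have h : v = ∑ j, v j • (Pi.single j 1 : Fin n → ℝ) := by
    funext k; simp [Finset.sum_apply, Pi.single_apply]
  conv_rhs => rw [h]
  simp [brp, mul_comm]

/-- The horizontal derivative. -/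
def Dv {n m : ℕ} (br : (Fin n → ℝ) →ₗ[ℝ] (Fin n → ℝ) →ₗ[ℝ] (Fin m → ℝ)) (i : Fin n)
    (p : MvPolynomial (Fin n ⊕ Fin m) ℝ) : MvPolynomial (Fin n ⊕ Fin m) ℝ :=
  pderiv (Sum.inl i) p - C (1 / 2) * ∑ α, brp br i α * pderiv (Sum.inr α) p

theorem six_coeffs (a₀ a₁ a₂ a₃ a₄ a₅ : ℝ)
    (h : ∀ t : ℝ, 0 < t → a₀ + a₁ * t + a₂ * t ^ 2 + a₃ * t ^ 3 + a₄ * t ^ 4 + a₅ * t ^ 5 = 0) :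
    a₀ = 0 ∧ a₁ = 0 ∧ a₂ = 0 ∧ a₃ = 0 ∧ a₄ = 0 ∧ a₅ = 0 := by
  have h1 := h 1 (by norm_num)
  have h2 := h 2 (by norm_num)
  have h3 := h 3 (by norm_num)
  have h4 := h 4 (by norm_num)
  have h5 := h 5 (by norm_num)
  have h6 := h 6 (by norm_num)
  norm_num at h1 h2 h3 h4 h5 h6
  refine ⟨?_, ?_, ?_, ?_, ?_, ?_⟩ <;> linarith

theorem expand_sq {k : ℕ} (a b c : Fin k → ℝ) (t : ℝ) :
    ∑ i, (a i * t ^ 2 + b i * t + c i) ^ 2 = (∑ i, a i ^ 2) * t ^ 4 + (2 * ∑ i, a i * b i) * t ^ 3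
      + ((∑ i, b i ^ 2) + 2 * ∑ i, a i * c i) * t ^ 2 + (2 * ∑ i, b i * c i) * t
      + ∑ i, c i ^ 2 := by
  simp only [Finset.sum_mul, Finset.mul_sum, ← Finset.sum_add_distrib]
  exact Finset.sum_congr rfl fun i _ => by ring

/-- The coefficient equations. -/
theorem coeff_eqs {n m : ℕ} (br : (Fin n → ℝ) →ₗ[ℝ] (Fin n → ℝ) →ₗ[ℝ] (Fin m → ℝ))
    (A B D : MvPolynomial (Fin n ⊕ Fin m) ℝ) (b₁ b₀ : ℝ)
    (h : Transnormal n m br (rename (inc n m) A * X (Sum.inr (Sum.inr ())) ^ 2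
        + rename (inc n m) B * X (Sum.inr (Sum.inr ())) + rename (inc n m) D) b₁ b₀) :
    (∑ α, (pderiv (Sum.inr α) A) ^ 2 = 0) ∧
    (∑ i, (Dv br i A) ^ 2 + 2 * ∑ α, pderiv (Sum.inr α) A * pderiv (Sum.inr α) B = 0) ∧
    (2 * ∑ i, Dv br i A * Dv br i B + (∑ α, (pderiv (Sum.inr α) B) ^ 2
      + 2 * ∑ α, pderiv (Sum.inr α) A * pderiv (Sum.inr α) D) = 0) ∧
    (-2 * A * B + (∑ i, (Dv br i B) ^ 2 + 2 * ∑ i, Dv br i A * Dv br i D)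
      + 2 * ∑ α, pderiv (Sum.inr α) B * pderiv (Sum.inr α) D = C b₁ * A) ∧
    (- B ^ 2 - 4 * A * D + 2 * ∑ i, Dv br i B * Dv br i D + ∑ α, (pderiv (Sum.inr α) D) ^ 2
      = C b₁ * B + C b₀) ∧
    (-2 * B * D + ∑ i, (Dv br i D) ^ 2 = C b₁ * D) := by
  have key : ∀ x : Fin n ⊕ Fin m → ℝ,
    (eval x (-2 * B * D + ∑ i, (Dv br i D) ^ 2 - C b₁ * D) = 0) ∧
    (eval x (- B ^ 2 - 4 * A * D + 2 * ∑ i, Dv br i B * Dv br i D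
      + ∑ α, (pderiv (Sum.inr α) D) ^ 2 - (C b₁ * B + C b₀)) = 0) ∧
    (eval x (-2 * A * B + (∑ i, (Dv br i B) ^ 2 + 2 * ∑ i, Dv br i A * Dv br i D)
      + 2 * ∑ α, pderiv (Sum.inr α) B * pderiv (Sum.inr α) D - C b₁ * A) = 0) ∧
    (eval x (2 * ∑ i, Dv br i A * Dv br i B + (∑ α, (pderiv (Sum.inr α) B) ^ 2
      + 2 * ∑ α, pderiv (Sum.inr α) A * pderiv (Sum.inr α) D)) = 0) ∧
    (eval x (∑ i, (Dv br i A) ^ 2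
      + 2 * ∑ α, pderiv (Sum.inr α) A * pderiv (Sum.inr α) B) = 0) ∧
    (eval x (∑ α, (pderiv (Sum.inr α) A) ^ 2) = 0) := by
    intro x
    obtain ⟨v, z, rfl⟩ : ∃ v z, x = Sum.elim v z :=
      ⟨x ∘ Sum.inl, x ∘ Sum.inr, (Sum.elim_comp_inl_inr x).symm⟩
    apply six_coeffs
    intro t ht
    have h1 := h v z t ht
    have ha : ∀ α : Fin m, (Sum.inr (Sum.inl α) : Fin n ⊕ Fin m ⊕ Unit) = inc n m (Sum.inr α) :=
      fun _ => rfl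
    have hi : ∀ i : Fin n, (Sum.inl i : Fin n ⊕ Fin m ⊕ Unit) = inc n m (Sum.inl i) :=
      fun _ => rfl
    simp only [ha, hi, evp_G, evp_Gt, evp_Gx] at h1
    have hD : ∀ p i, eval (Sum.elim v z) (Dv br i p) = eval (Sum.elim v z) (pderiv (Sum.inl i) p)
        - (1 / 2) * ∑ α, br (Pi.single i 1) v α * eval (Sum.elim v z) (pderiv (Sum.inr α) p) := by
      intro p i
      simp [Dv, eval_brp]
    have hDG : ∀ i : Fin n, (eval (Sum.elim v z)) ((pderiv (Sum.inl i)) A) * t ^ 2 +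
          (eval (Sum.elim v z)) ((pderiv (Sum.inl i)) B) * t +
          (eval (Sum.elim v z)) ((pderiv (Sum.inl i)) D) -
          1 / 2 * ∑ α : Fin m, br (Pi.single i 1) v α *
            ((eval (Sum.elim v z)) ((pderiv (Sum.inr α)) A) * t ^ 2 +
              (eval (Sum.elim v z)) ((pderiv (Sum.inr α)) B) * t +
              (eval (Sum.elim v z)) ((pderiv (Sum.inr α)) D))
        = eval (Sum.elim v z) (Dv br i A) * t ^ 2 + eval (Sum.elim v z) (Dv br i B) * t
          + eval (Sum.elim v z) (Dv br i D) := by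
      intro i
      simp only [hD, mul_add, Finset.sum_add_distrib, ← mul_assoc, ← Finset.sum_mul]
      ring
    simp only [hDG] at h1
    rw [expand_sq, expand_sq] at h1
    have ht' := ht.ne'
    field_simp at h1
    have e2 : eval (Sum.elim v z) (2 : MvPolynomial (Fin n ⊕ Fin m) ℝ) = 2 := map_ofNat _ 2
    have e4 : eval (Sum.elim v z) (4 : MvPolynomial (Fin n ⊕ Fin m) ℝ) = 4 := map_ofNat _ 4
    simp only [map_add, map_sub, map_mul, map_neg, map_sum, map_pow, eval_C, e2, e4]
    linear_combination h1
  refine ⟨?_, ?_, ?_, ?_, ?_, ?_⟩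
  · exact MvPolynomial.funext fun x => by simpa only [map_zero] using (key x).2.2.2.2.2
  · exact MvPolynomial.funext fun x => by simpa only [map_zero] using (key x).2.2.2.2.1
  · exact MvPolynomial.funext fun x => by simpa only [map_zero] using (key x).2.2.2.1
  · exact sub_eq_zero.1 (MvPolynomial.funext fun x => by simpa only [map_zero] using (key x).2.2.1)
  · exact sub_eq_zero.1 (MvPolynomial.funext fun x => by simpa only [map_zero] using (key x).2.1)
  · exact sub_eq_zero.1 (MvPolynomial.funext fun x => by simpa only [map_zero] using (key x).1)

theorem FD_zero_of_pderiv {σ : Type} [Fintype σ] {w : σ → ℕ} {k : ℕ} (e : Fin k → σ)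
    (hw0 : ∀ j, j ∉ Set.range e → w j = 0) {p : MvPolynomial σ ℝ}
    (h : ∀ i, pderiv (e i) p = 0) : p ∈ FD w 0 := by
  obtain ⟨N, hN⟩ := FD_exists w p
  induction N with
  | zero => exact hN
  | succ N ih =>
    apply ih
    have ht := FD_top hN
    suffices hz : weightedHomogeneousComponent w (N + 1) p = 0 by rwa [hz, sub_zero] at ht
    ext d
    rw [coeff_weightedHomogeneousComponent, coeff_zero]
    split_ifs with hd
    · by_contra hne
      have : Finsupp.weight w d = 0 := by
        rw [Finsupp.weight_apply, Finsupp.sum]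
        refine Finset.sum_eq_zero fun j hj => ?_
        by_cases hjr : j ∈ Set.range e
        · obtain ⟨i, rfl⟩ := hjr
          exfalso
          have h0 := congrArg (coeff (d - Finsupp.single (e i) 1)) (h i)
          rw [coeff_pderiv, coeff_zero] at h0
          have hle : Finsupp.single (e i) 1 ≤ d := by
            rw [Finsupp.single_le_iff]
            exact Nat.one_le_iff_ne_zero.2 (Finsupp.mem_support_iff.1 hj)
          rw [tsub_add_cancel_of_le hle] at h0
          rcases mul_eq_zero.1 h0 with h1 | h1
          · exact hne h1
          · exact absurd h1 (by positivity)
        · simp [hw0 j hjr]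
      omega
    · rfl

/-- If `G` is a polynomial not divisible by `t` whose degree in `t` equals `2`,
and `F = G/t` is transnormal, then
`G = c·(t² + ½(‖Π_W(v−v₀)‖² − β)·t + ⟨z, Π_Y z⟩ + ⟨c(v), z⟩ + d(v))` for some constant `c ≠ 0`,
a real number `β`, an orthogonal projection `Π_W` onto a subspace `W ⊆ V` with `v₀ ∈ W`, an
orthogonal projection `Π_Y` onto a subspace `Y ⊆ Z`, a polynomial map `c : V → Z` (components
`cp α`) and a polynomial function `d : V → ℝ`. -/
theorem stmt_7 (n m : ℕ)
    (J : (Fin m → ℝ) →ₗ[ℝ] (Fin n → ℝ) →ₗ[ℝ] (Fin n → ℝ))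
    (hJ : ∀ (z : Fin m → ℝ) (v : Fin n → ℝ), dotR (J z v) (J z v) = dotR z z * dotR v v)
    (br : (Fin n → ℝ) →ₗ[ℝ] (Fin n → ℝ) →ₗ[ℝ] (Fin m → ℝ))
    (hbr : ∀ (v₁ v₂ : Fin n → ℝ) (z : Fin m → ℝ), dotR (br v₁ v₂) z = dotR (J z v₁) v₂)
    (G : MvPolynomial (Fin n ⊕ Fin m ⊕ Unit) ℝ)
    (hGdiv : ¬ (MvPolynomial.X (Sum.inr (Sum.inr ())) ∣ G))
    (hdeg : MvPolynomial.degreeOf (Sum.inr (Sum.inr ())) G = 2)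
    (b₁ b₀ : ℝ) (htrans : Transnormal n m br G b₁ b₀) :
    ∃ c : ℝ, c ≠ 0 ∧ ∃ β : ℝ,
      ∃ Pw : (Fin n → ℝ) →ₗ[ℝ] (Fin n → ℝ), Pw ∘ₗ Pw = Pw ∧
        (∀ u w : Fin n → ℝ, dotR (Pw u) w = dotR u (Pw w)) ∧
      ∃ v₀ : Fin n → ℝ, Pw v₀ = v₀ ∧
      ∃ Py : (Fin m → ℝ) →ₗ[ℝ] (Fin m → ℝ), Py ∘ₗ Py = Py ∧
        (∀ u w : Fin m → ℝ, dotR (Py u) w = dotR u (Py w)) ∧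
      ∃ cp : Fin m → MvPolynomial (Fin n) ℝ, ∃ d : MvPolynomial (Fin n) ℝ,
        ∀ (v : Fin n → ℝ) (z : Fin m → ℝ) (t : ℝ),
          evp G v z t = c * (t ^ 2
            + (1 / 2) * (dotR (Pw (v - v₀)) (Pw (v - v₀)) - β) * t
            + dotR z (Py z)
            + (∑ α : Fin m, MvPolynomial.eval v (cp α) * z α)
            + MvPolynomial.eval v d) := by
  obtain ⟨A, B, D, rfl⟩ := decomp G hdeg.le
  obtain ⟨E1, E2, E3, E4, E5, E6⟩ := coeff_eqs br A B D b₁ b₀ htrans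
  obtain ⟨c, hc, hA⟩ : ∃ c : ℝ, c ≠ 0 ∧ A = C c := by
    have hAz := sos_zero _ E1
    simp only [hAz, zero_mul, Finset.sum_const_zero, mul_zero, add_zero] at E2
    have hAv := sos_zero _ E2
    have hAv' : ∀ i, pderiv (Sum.inl i) A = 0 := by
      intro i
      have := hAv i
      simpa [Dv, hAz] using this
    have hconst : A = C (eval 0 A) := by
      apply MvPolynomial.funext
      intro x
      rw [eval_C]
      apply eval_indep
      rintro (j | j) _
      · exact hAv' j
      · exact hAz j
    refine ⟨_, ?_, hconst⟩
    intro h0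
    rw [h0, map_zero] at hconst
    subst hconst
    have hd := hdeg
    have hr : ∀ p : MvPolynomial (Fin n ⊕ Fin m) ℝ,
        degreeOf (Sum.inr (Sum.inr ())) (rename (inc n m) p) = 0 := by
      classical
      intro p
      by_contra hne
      have h1 : (Sum.inr (Sum.inr ()) : Fin n ⊕ Fin m ⊕ Unit) ∈ (rename (inc n m) p).vars := by
        rw [vars_def, Multiset.mem_toFinset, ← Multiset.count_ne_zero, ← degreeOf_def]
        exact hne
      have := vars_rename (inc n m) p h1
      rw [Finset.mem_image] at this
      obtain ⟨a, _, ha⟩ := this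
      exact inc_ne n m a ha
    rw [map_zero, zero_mul, zero_add] at hd
    have h1 := degreeOf_add_le (Sum.inr (Sum.inr ()))
      (rename (inc n m) B * X (Sum.inr (Sum.inr ()))) (rename (inc n m) D)
    have h2 := degreeOf_mul_le (Sum.inr (Sum.inr ()))
      (rename (inc n m) B) (X (Sum.inr (Sum.inr ())))
    rw [hr] at h1 h2
    rw [degreeOf_X_self] at h2
    omega
  subst hA
  have hDA : ∀ i, Dv br i (C c : MvPolynomial (Fin n ⊕ Fin m) ℝ) = 0 := by
    intro i; simp [Dv]
  simp only [hDA, zero_mul, Finset.sum_const_zero, mul_zero, pderiv_C, add_zero, zero_add] at E3 E4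
  have hBz := sos_zero _ E3
  simp only [hBz, zero_mul, Finset.sum_const_zero, mul_zero, add_zero] at E4
  have hDB : ∀ i, Dv br i B = pderiv (Sum.inl i) B := by
    intro i; simp [Dv, hBz]
  simp only [hDB] at E4 E5
  have hcc : (C (1 / c) * C c : MvPolynomial (Fin n ⊕ Fin m) ℝ) = 1 := by
    rw [← C_mul, one_div_mul_cancel hc, C_1]
  -- the coefficient of `t`
  obtain ⟨Pw, hPw, hPws, v₀, hPv, hB⟩ := quad_form (σ := Fin n ⊕ Fin m)
    (w := Sum.elim (fun _ => 1) (fun _ => 0)) Sum.inl Sum.inl_injective (fun i => rfl)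
    (by
      rintro (j | j) hj
      · exact absurd ⟨j, rfl⟩ hj
      · rfl) (C (1 / c) * (B + C (b₁ / 2)))
    (by
      rintro (j | j) hj
      · exact absurd ⟨j, rfl⟩ hj
      · simp [hBz])
    (by
      simp only [pderiv_C_mul, map_add, pderiv_C, add_zero, mul_pow]
      rw [← Finset.mul_sum]
      have h2 : (C b₁ : MvPolynomial (Fin n ⊕ Fin m) ℝ) = 2 * C (b₁ / 2) := by
        rw [two_mul, ← C_add, add_halves]
      rw [h2] at E4
      linear_combination C (1 / c) ^ 2 * E4
        + (2 * C (1 / c) * (B + C (b₁ / 2))) * hcc)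
  -- degree of `D` in `z`
  set w : Fin n ⊕ Fin m → ℕ := Sum.elim (fun _ => 0) (fun _ => 1) with hw
  have hw1 : ∀ i : Fin m, w (Sum.inr i) = 1 := fun _ => rfl
  have hwl : ∀ i : Fin n, w (Sum.inl i) = 0 := fun _ => rfl
  have hw0 : ∀ j, j ∉ Set.range (Sum.inr : Fin m → Fin n ⊕ Fin m) → w j = 0 := by
    rintro (j | j) hj
    · rfl
    · exact absurd ⟨j, rfl⟩ hj
  have hB0 : B ∈ FD w 0 := FD_zero_of_pderiv Sum.inr hw0 hBz
  have hbr0 : ∀ i α, brp br i α ∈ FD w 0 := fun i α =>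
    Submodule.sum_mem _ fun j _ => FD_mul (N := 0) (M := 0) (FD_C _) (FD_X _ (hwl j).le)
  have hV : ∀ N i p, p ∈ FD w (N + 1) →
      C (1 / 2) * ∑ α, brp br i α * pderiv (Sum.inr α) p ∈ FD w N := by
    intro N i p hp
    rw [← zero_add N]
    refine FD_mul (FD_C _) (Submodule.sum_mem _ fun α _ => ?_)
    rw [← zero_add N]
    exact FD_mul (hbr0 i α) (FD_pderiv _ hp (by rw [hw1]))
  have hDvN : ∀ N i p, p ∈ FD w N → Dv br i p ∈ FD w N := fun N i p hp =>
    Submodule.sub_mem _ (FD_pderiv _ hp (by omega)) (hV N i p (FD_mono (by omega) hp))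
  have hrest : ∀ N, (∀ i, Dv br i D ∈ FD w N) →
      C b₁ * B + C b₀ + B ^ 2 - 2 * ∑ i, pderiv (Sum.inl i) B * Dv br i D ∈ FD w N := by
    intro N hN
    have h0 : C b₁ * B + C b₀ + B ^ 2 ∈ FD w 0 := by
      rw [pow_two]
      exact Submodule.add_mem _ (Submodule.add_mem _ (FD_mul (N := 0) (M := 0) (FD_C _) hB0)
        (FD_C _)) (FD_mul (N := 0) (M := 0) hB0 hB0)
    refine Submodule.sub_mem _ (FD_mono (Nat.zero_le _) h0) ?_
    rw [two_mul]
    have h1 : ∑ i, pderiv (Sum.inl i) B * Dv br i D ∈ FD w N := by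
      refine Submodule.sum_mem _ fun i _ => ?_
      rw [← zero_add N]
      exact FD_mul (FD_pderiv _ hB0 (by omega)) (hN i)
    exact Submodule.add_mem _ h1 h1
  have h4 : ∀ N p, p ∈ FD w N → 4 * C c * p ∈ FD w N := by
    intro N p hp
    have e4 : (4 * C c : MvPolynomial (Fin n ⊕ Fin m) ℝ) = C (4 * c) := by
      rw [C_mul]; rfl
    rw [e4, ← zero_add N]
    exact FD_mul (FD_C _) hp
  have hD2 : D ∈ FD w 2 := by
    refine reduce_deg Sum.inr hw1 hw0 D fun N hN => ?_
    have e1 : ∑ α, (pderiv (Sum.inr α) D) ^ 2 = 4 * C c * D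
        + (C b₁ * B + C b₀ + B ^ 2 - 2 * ∑ i, pderiv (Sum.inl i) B * Dv br i D) := by
      linear_combination E5
    rw [e1]
    exact Submodule.add_mem _ (h4 N D hN) (hrest N fun i => hDvN N i D hN)
  set D2 := weightedHomogeneousComponent w 2 D with hD2def
  have hD2h : IsWeightedHomogeneous w D2 2 :=
    weightedHomogeneousComponent_isWeightedHomogeneous (w := w) 2 D
  have hDD : D - D2 ∈ FD w 1 := FD_top (N := 1) hD2
  have hD2v : ∀ i, pderiv (Sum.inl i) D2 = 0 := by
    refine sos_top (w := w) (N := 1) (M := 2) (fun i => Dv br i D)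
      (fun i => pderiv (Sum.inl i) D2) (fun i => hD2h.pderiv (by rw [hwl])) (fun i => ?_) ?_
      (by omega)
    · have e1 : Dv br i D - pderiv (Sum.inl i) D2 = pderiv (Sum.inl i) (D - D2)
          - C (1 / 2) * ∑ α, brp br i α * pderiv (Sum.inr α) D := by
        rw [Dv, map_sub]; ring
      rw [e1]
      exact Submodule.sub_mem _ (FD_pderiv _ hDD (by omega)) (hV 1 i D hD2)
    · have e1 : ∑ i, (Dv br i D) ^ 2 = (C b₁ + B + B) * D := by linear_combination E6
      rw [e1]
      exact FD_mul (N := 0) (M := 2) (Submodule.add_mem _ (Submodule.add_mem _ (FD_C _) hB0) hB0)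
        hD2
  have hDv1 : ∀ i, Dv br i D ∈ FD w 1 := by
    intro i
    have e1 : Dv br i D = pderiv (Sum.inl i) (D - D2)
          - C (1 / 2) * ∑ α, brp br i α * pderiv (Sum.inr α) D := by
      rw [Dv, map_sub, hD2v, sub_zero]
    rw [e1]
    exact Submodule.sub_mem _ (FD_pderiv _ hDD (by omega)) (hV 1 i D hD2)
  have hquad : ∑ α, (pderiv (Sum.inr α) D2) ^ 2 = 4 * C c * D2 := by
    rw [← sub_eq_zero]
    refine hom_FD_zero (w := w) (N := 2) (M := 1) ?_ ?_ (by omega)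
    · refine IsWeightedHomogeneous.sub ?_ ?_
      · refine IsWeightedHomogeneous.sum _ _ _ fun α _ => ?_
        rw [pow_two]
        have h1 : IsWeightedHomogeneous w (pderiv (Sum.inr α) D2) 1 := hD2h.pderiv (by rw [hw1])
        exact h1.mul h1
      · have e4 : (4 * C c : MvPolynomial (Fin n ⊕ Fin m) ℝ) = C (4 * c) := by
          rw [C_mul]; rfl
        rw [e4]
        exact hD2h.C_mul _
    · have e1 : ∑ α, (pderiv (Sum.inr α) D2) ^ 2 = ∑ α, (pderiv (Sum.inr α) D) ^ 2
          - ∑ α, pderiv (Sum.inr α) (D - D2) * (pderiv (Sum.inr α) D + pderiv (Sum.inr α) D2) := by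
        rw [← Finset.sum_sub_distrib]
        exact Finset.sum_congr rfl fun α _ => by rw [map_sub]; ring
      have e2 : ∑ α, (pderiv (Sum.inr α) D2) ^ 2 - 4 * C c * D2
          = 4 * C c * (D - D2)
            + (C b₁ * B + C b₀ + B ^ 2 - 2 * ∑ i, pderiv (Sum.inl i) B * Dv br i D)
            - ∑ α, pderiv (Sum.inr α) (D - D2)
              * (pderiv (Sum.inr α) D + pderiv (Sum.inr α) D2) := by
        rw [e1]
        linear_combination E5
      rw [e2]
      refine Submodule.sub_mem _ (Submodule.add_mem _ (h4 1 _ hDD) (hrest 1 hDv1))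
        (Submodule.sum_mem _ fun α _ => ?_)
      exact FD_mul (N := 0) (M := 1) (FD_pderiv _ hDD (by rw [hw1]))
        (Submodule.add_mem _ (FD_pderiv _ hD2 (by rw [hw1]))
          (FD_pderiv _ (FD_of_hom hD2h) (by rw [hw1])))
  have hc2 : (C (1 / (2 * c)) * (2 * C c) : MvPolynomial (Fin n ⊕ Fin m) ℝ) = 1 := by
    have e2 : (2 * C c : MvPolynomial (Fin n ⊕ Fin m) ℝ) = C (2 * c) := by
      rw [C_mul]; rfl
    rw [e2, ← C_mul, one_div_mul_cancel (mul_ne_zero two_ne_zero hc), C_1]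
  obtain ⟨Py, hPy, hPys, z₀, hPz, hQ⟩ := quad_form (σ := Fin n ⊕ Fin m)
    (w := w) Sum.inr Sum.inr_injective hw1 hw0 (C (1 / (2 * c)) * D2)
    (by
      rintro (j | j) hj
      · simp [hD2v]
      · exact absurd ⟨j, rfl⟩ hj)
    (by
      simp only [pderiv_C_mul, mul_pow]
      rw [← Finset.mul_sum, hquad]
      linear_combination (2 * C (1 / (2 * c)) * D2) * hc2)
  have hz₀ : z₀ = 0 := by
    have h1 := hQ 0
    have h2 : eval 0 D2 = 0 := by
      have := congrArg (eval 0) hD2h.sum_weight_X_mul_pderiv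
      rw [two_smul, map_add, map_sum, Finset.sum_eq_zero (fun j _ => by simp)] at this
      linarith
    have e1 : (fun i => (0 : Fin n ⊕ Fin m → ℝ) (Sum.inr i) - z₀ i) = - z₀ := by
      funext i; simp
    rw [e1, map_neg, hPz, map_mul, h2, mul_zero] at h1
    have h3 : ∑ i, z₀ i ^ 2 = 0 := by
      have : dotR (-z₀) (-z₀) = ∑ i, z₀ i ^ 2 := by
        simp [dotR, pow_two]
      linarith
    rw [Finset.sum_eq_zero_iff_of_nonneg (fun _ _ => sq_nonneg _)] at h3
    funext i
    simpa using h3 i (Finset.mem_univ i)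
  have hD2e : ∀ v z, eval (Sum.elim v z) D2 = c * dotR z (Py z) := by
    intro v z
    have h1 := hQ (Sum.elim v z)
    simp only [hz₀, map_mul, eval_C, Sum.elim_inr, Pi.zero_apply, sub_zero] at h1
    rw [hPys z (Py z), ← LinearMap.comp_apply, hPy] at h1
    field_simp at h1
    linarith
  -- lower order parts
  set D1 := weightedHomogeneousComponent w 1 (D - D2) with hD1def
  have hD1h : IsWeightedHomogeneous w D1 1 :=
    weightedHomogeneousComponent_isWeightedHomogeneous (w := w) 1 (D - D2)
  have hD0 : D - D2 - D1 ∈ FD w 0 := FD_top (N := 0) hDD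
  have hind : ∀ p, p ∈ FD w 0 → ∀ v z, eval (Sum.elim v z) p = eval (Sum.elim v 0) p := by
    intro p hp v z
    apply eval_indep
    rintro (j | j) hj
    · exact absurd rfl hj
    · exact FD_pderiv_zero _ hp (by rw [hw1]; norm_num)
  set ψ : MvPolynomial (Fin n ⊕ Fin m) ℝ →ₐ[ℝ] MvPolynomial (Fin n) ℝ :=
    aeval (Sum.elim X (fun _ => 0)) with hψ
  have hψe : ∀ p v, eval v (ψ p) = eval (Sum.elim v 0) p := by
    intro p v
    have : (eval v).comp (ψ : MvPolynomial (Fin n ⊕ Fin m) ℝ →+* MvPolynomial (Fin n) ℝ)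
        = eval (Sum.elim v 0) := by
      apply MvPolynomial.ringHom_ext
      · intro r; simp [hψ]
      · rintro (j | j) <;> simp [hψ]
    exact congrArg (fun f => f p) this
  refine ⟨c, hc, b₁ / c, Pw, hPw, hPws, v₀, hPv, Py, hPy, hPys,
    fun α => C (1 / c) * ψ (pderiv (Sum.inr α) D1), C (1 / c) * ψ (D - D2 - D1), ?_⟩
  intro v z t
  rw [evp_G, eval_C]
  have hBe := hB (Sum.elim v z)
  have e1 : (fun i => (Sum.elim v z : Fin n ⊕ Fin m → ℝ) (Sum.inl i) - v₀ i) = v - v₀ := rfl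
  rw [e1, map_mul, map_add, eval_C, eval_C] at hBe
  have hD1e : eval (Sum.elim v z) D1
      = ∑ α, eval (Sum.elim v 0) (pderiv (Sum.inr α) D1) * z α := by
    have := congrArg (eval (Sum.elim v z)) hD1h.sum_weight_X_mul_pderiv
    rw [one_smul] at this
    rw [← this, Fintype.sum_sum_type]
    simp only [hwl, hw1, zero_smul, one_smul, Finset.sum_const_zero, zero_add, map_sum, map_mul,
      eval_X, Sum.elim_inr]
    refine Finset.sum_congr rfl fun α _ => ?_
    rw [hind _ (FD_pderiv _ (FD_of_hom hD1h) (by rw [hw1])) v z, mul_comm]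
  have hDe : eval (Sum.elim v z) D = c * dotR z (Py z)
      + ∑ α, eval (Sum.elim v 0) (pderiv (Sum.inr α) D1) * z α
      + eval (Sum.elim v 0) (D - D2 - D1) := by
    rw [← hD2e v z, ← hD1e, ← hind _ hD0 v z]
    simp only [map_sub]; ring
  rw [hDe]
  simp only [map_mul, eval_C, hψe, mul_assoc, ← Finset.mul_sum]
  have hBe2 : eval (Sum.elim v z) B
      = c * (1 / 2 * dotR (Pw (v - v₀)) (Pw (v - v₀))) - b₁ / 2 := by
    rw [← hBe]; field_simp; ring
  rw [hBe2]
  field_simp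
  ring
end
end
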